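/- Let I ⊆ R be a bihomogeneous ideal, (a,b) an admissible bidegree for I, and h an admissible linear form for (a,b). The assignment g' ↦ m_{g'} is a well-defined ring homomorphism from (R_{X,h})₀ to the k-algebra of k-linear endomorphisms of (R/I)_{(a,b)} (in particular, m_{g'} is independent of the chosen representative g/h^k of g'), and its image is a commutative subring: m_1 = Id, m_{g'+f'} = m_{g'} + m_{f'}, and m_{g'f'} = m_{g'} ∘ m_{f'} = m_{f'} ∘ m_{g'} for all f', g' ∈ (R_{X,h})₀. -/

import Mathlib

open MvPolynomial

noncomputable section

/-- The variables of the bigraded ring: `x₀,…,xₙ` and `y₀,…,y_m`. -/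
abbrev Vars (n m : ℕ) := Fin (n+1) ⊕ Fin (m+1)

/-- The bigrading weight: `deg xᵢ = (1,0)`, `deg y_j = (0,1)`. -/
def wB (n m : ℕ) : Vars n m → ℕ × ℕ := Sum.elim (fun _ => (1, 0)) (fun _ => (0, 1))

/-- The bigraded polynomial ring `R = k[x₀,…,xₙ,y₀,…,y_m]`. -/
abbrev BiRing (k : Type*) [Field k] (n m : ℕ) := MvPolynomial (Vars n m) k

variable (k : Type*) [Field k] (n m : ℕ)

/-- The `k`-vector space of bihomogeneous polynomials of bidegree `d`. -/
def biComponent (d : ℕ × ℕ) : Submodule k (BiRing k n m) :=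
  weightedHomogeneousSubmodule k (wB n m) d

/-- An ideal is bihomogeneous if it is generated by bihomogeneous elements. -/
def IsBihomogeneous (I : Ideal (BiRing k n m)) : Prop :=
  ∃ S : Set (BiRing k n m), Ideal.span S = I ∧
    ∀ f ∈ S, ∃ d : ℕ × ℕ, f.IsWeightedHomogeneous (wB n m) d

/-- `I` is generated in bidegrees componentwise at most `(a,b)`. -/
def GenInDegLE (I : Ideal (BiRing k n m)) (a b : ℕ) : Prop :=
  ∃ S : Set (BiRing k n m), Ideal.span S = I ∧
    ∀ f ∈ S, ∃ d : ℕ × ℕ, d.1 ≤ a ∧ d.2 ≤ b ∧ f.IsWeightedHomogeneous (wB n m) d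

/-- The Hilbert function `HF_{R/I}(a,b) = dim_k (R/I)_{(a,b)}`, where `(R/I)_{(a,b)}` is the
image of the bidegree-`(a,b)` component of `R` in `R/I`. -/
def HF (I : Ideal (BiRing k n m)) (a b : ℕ) : ℕ :=
  Module.finrank k ((biComponent k n m (a, b)).map (Ideal.Quotient.mkₐ k I).toLinearMap)

/-- `h` is an admissible linear form for `I` at bidegree `(a,b)`:  `h` has bidegree `(1,0)`,
`HF_{R/I}(a,b) = HF_{R/I}(a+1,b)` and `HF_{R/(I+⟨h⟩)}(a,b) = 0`. -/
def IsAdmissibleForm (I : Ideal (BiRing k n m)) (a b : ℕ) (h : BiRing k n m) : Prop :=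
  h.IsWeightedHomogeneous (wB n m) (1, 0) ∧
  HF k n m I a b = HF k n m I (a+1) b ∧
  HF k n m (I ⊔ Ideal.span {h}) a b = 0

/-- `(a,b)` is an admissible bidegree for `I`: `I` is generated in bidegrees `≤ (a,b)` and
there is an admissible linear form for `(a,b)`. -/
def IsAdmissible (I : Ideal (BiRing k n m)) (a b : ℕ) : Prop :=
  GenInDegLE k n m I a b ∧ ∃ h, IsAdmissibleForm k n m I a b h

/-- `(R/I)_{(a,b)}`: the bidegree-`(a,b)` part of `R/I`. -/
def quotComponent (I : Ideal (BiRing k n m)) (a b : ℕ) :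
    Submodule k (BiRing k n m ⧸ I) :=
  (biComponent k n m (a, b)).map (Ideal.Quotient.mkₐ k I).toLinearMap

lemma biComponent_le_restrictTotalDegree (d : ℕ × ℕ) :
    biComponent k n m d ≤ restrictTotalDegree (Vars n m) k (d.1 + d.2) := by
  intro p hp
  rw [mem_restrictTotalDegree]
  apply Finset.sup_le
  intro s hs
  have h1 : Finsupp.weight (wB n m) s = d := hp (mem_support_iff.mp hs)
  have h2 : (Finsupp.weight (wB n m) s).1 + (Finsupp.weight (wB n m) s).2
      = s.sum fun _ e => e := by
    rw [Finsupp.weight_apply, Finsupp.sum, Finsupp.sum, Prod.fst_sum, Prod.snd_sum,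
      ← Finset.sum_add_distrib]
    apply Finset.sum_congr rfl
    intro i _
    rcases i with i | j <;> simp [wB]
  rw [h1] at h2
  rw [← h2]

instance (d : ℕ × ℕ) : Module.Finite k (biComponent k n m d) :=
  Submodule.finiteDimensional_of_le (biComponent_le_restrictTotalDegree k n m d)

instance (I : Ideal (BiRing k n m)) (a b : ℕ) : Module.Finite k (quotComponent k n m I a b) :=
  Module.Finite.map _ _

/-- The multiplication map `m̄_g : (R/I)_{(a,b)} → (R/I)_{(a+c,b)}`, `[f] ↦ [g·f]`,
for `g` bihomogeneous of bidegree `(c,0)`. -/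
def mulMap (I : Ideal (BiRing k n m)) (a b c : ℕ) (g : BiRing k n m)
    (hg : g.IsWeightedHomogeneous (wB n m) (c, 0)) :
    quotComponent k n m I a b →ₗ[k] quotComponent k n m I (a+c) b :=
  (LinearMap.mulLeft k (Ideal.Quotient.mkₐ k I g)).restrict
    (p := quotComponent k n m I a b) (q := quotComponent k n m I (a+c) b)
    (by
      rintro x ⟨f, hf, rfl⟩
      refine ⟨g * f, ?_, by simp [map_mul]⟩
      have h2 : ((c, 0) + (a, b) : ℕ × ℕ) = (a + c, b) := by
        simp [Prod.ext_iff, Nat.add_comm]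
      exact h2 ▸ hg.mul hf)

/-- Let `(a,b)` be an admissible bidegree for the bihomogeneous ideal `I` with
admissible linear form `h`.  Denote by `ψ c` the (two-sided) inverse of `m̄_{h^c}`, so that the
multiplication map by `g' = g/h^c ∈ (R_{X,h})₀` is `m_{g'} = ψ c ∘ m̄_g`.  Then `g' ↦ m_{g'}` is a
well-defined ring homomorphism from `(R_{X,h})₀` to the endomorphisms of `(R/I)_{(a,b)}`, with
commutative image: it is independent of the representative `g/h^c`, sends `1` to the identity,
sums to sums, and products to (commuting) compositions. -/
theorem statement_10 (k : Type*) [Field k] (hk : Infinite k) (n m : ℕ)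
    (I : Ideal (BiRing k n m)) (hI : IsBihomogeneous k n m I)
    (a b : ℕ) (h : BiRing k n m)
    (hgen : GenInDegLE k n m I a b) (hadm : IsAdmissibleForm k n m I a b h)
    (hpow : ∀ c : ℕ, (h ^ c).IsWeightedHomogeneous (wB n m) (c, 0))
    (ψ : ∀ c : ℕ, quotComponent k n m I (a+c) b →ₗ[k] quotComponent k n m I a b)
    (hψ : ∀ c : ℕ, ψ c ∘ₗ mulMap k n m I a b c (h ^ c) (hpow c) = LinearMap.id ∧
      mulMap k n m I a b c (h ^ c) (hpow c) ∘ₗ ψ c = LinearMap.id) :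
    (∀ (c₁ c₂ : ℕ) (g₁ g₂ : BiRing k n m)
        (hg₁ : g₁.IsWeightedHomogeneous (wB n m) (c₁, 0))
        (hg₂ : g₂.IsWeightedHomogeneous (wB n m) (c₂, 0)),
      h ^ c₂ * g₁ = h ^ c₁ * g₂ →
        ψ c₁ ∘ₗ mulMap k n m I a b c₁ g₁ hg₁ = ψ c₂ ∘ₗ mulMap k n m I a b c₂ g₂ hg₂) ∧
    (∀ h1 : (1 : BiRing k n m).IsWeightedHomogeneous (wB n m) (0, 0),
      ψ 0 ∘ₗ mulMap k n m I a b 0 1 h1 = LinearMap.id) ∧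
    (∀ (c : ℕ) (g₁ g₂ : BiRing k n m)
        (hg₁ : g₁.IsWeightedHomogeneous (wB n m) (c, 0))
        (hg₂ : g₂.IsWeightedHomogeneous (wB n m) (c, 0))
        (hg₁₂ : (g₁ + g₂).IsWeightedHomogeneous (wB n m) (c, 0)),
      ψ c ∘ₗ mulMap k n m I a b c (g₁ + g₂) hg₁₂
        = ψ c ∘ₗ mulMap k n m I a b c g₁ hg₁ + ψ c ∘ₗ mulMap k n m I a b c g₂ hg₂) ∧
    (∀ (c₁ c₂ : ℕ) (g₁ g₂ : BiRing k n m)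
        (hg₁ : g₁.IsWeightedHomogeneous (wB n m) (c₁, 0))
        (hg₂ : g₂.IsWeightedHomogeneous (wB n m) (c₂, 0))
        (hg₁₂ : (g₁ * g₂).IsWeightedHomogeneous (wB n m) (c₁ + c₂, 0)),
      ψ (c₁ + c₂) ∘ₗ mulMap k n m I a b (c₁ + c₂) (g₁ * g₂) hg₁₂
          = (ψ c₁ ∘ₗ mulMap k n m I a b c₁ g₁ hg₁) ∘ₗ (ψ c₂ ∘ₗ mulMap k n m I a b c₂ g₂ hg₂) ∧
      ψ (c₁ + c₂) ∘ₗ mulMap k n m I a b (c₁ + c₂) (g₁ * g₂) hg₁₂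
          = (ψ c₂ ∘ₗ mulMap k n m I a b c₂ g₂ hg₂) ∘ₗ (ψ c₁ ∘ₗ mulMap k n m I a b c₁ g₁ hg₁)) := by
  have key : ∀ (c : ℕ) (g : BiRing k n m) (hg : g.IsWeightedHomogeneous (wB n m) (c, 0))
      (x : quotComponent k n m I a b),
      (Ideal.Quotient.mkₐ k I h) ^ c *
        ((ψ c (mulMap k n m I a b c g hg x) : quotComponent k n m I a b) : BiRing k n m ⧸ I)
        = Ideal.Quotient.mkₐ k I g * (x : BiRing k n m ⧸ I) := by
    intro c g hg x
    have h1 := LinearMap.congr_fun (hψ c).2 (mulMap k n m I a b c g hg x)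
    have h2 := congrArg Subtype.val h1
    rw [← map_pow]
    exact h2
  have inj : ∀ (c : ℕ) (x y : quotComponent k n m I a b),
      (Ideal.Quotient.mkₐ k I h) ^ c * (x : BiRing k n m ⧸ I)
        = (Ideal.Quotient.mkₐ k I h) ^ c * (y : BiRing k n m ⧸ I) → x = y := by
    intro c x y hxy
    rw [← map_pow] at hxy
    have h1 : mulMap k n m I a b c (h ^ c) (hpow c) x
        = mulMap k n m I a b c (h ^ c) (hpow c) y := Subtype.ext hxy
    have hx := LinearMap.congr_fun (hψ c).1 x
    have hy := LinearMap.congr_fun (hψ c).1 y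
    simp only [LinearMap.comp_apply, LinearMap.id_apply] at hx hy
    rw [← hx, ← hy, h1]
  have mulc : ∀ (c₁ c₂ : ℕ) (g₁ g₂ : BiRing k n m)
        (hg₁ : g₁.IsWeightedHomogeneous (wB n m) (c₁, 0))
        (hg₂ : g₂.IsWeightedHomogeneous (wB n m) (c₂, 0))
        (hg₁₂ : (g₁ * g₂).IsWeightedHomogeneous (wB n m) (c₁ + c₂, 0))
        (x : quotComponent k n m I a b),
      ψ (c₁ + c₂) (mulMap k n m I a b (c₁ + c₂) (g₁ * g₂) hg₁₂ x)
          = ψ c₁ (mulMap k n m I a b c₁ g₁ hg₁ (ψ c₂ (mulMap k n m I a b c₂ g₂ hg₂ x))) := by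
    intro c₁ c₂ g₁ g₂ hg₁ hg₂ hg₁₂ x
    apply inj (c₁ + c₂)
    have e1 := key _ _ hg₁₂ x
    have e2 := key _ _ hg₂ x
    have e3 := key _ _ hg₁ (ψ c₂ (mulMap k n m I a b c₂ g₂ hg₂ x))
    rw [map_mul] at e1
    rw [e1, pow_add]
    linear_combination (-(Ideal.Quotient.mkₐ k I h) ^ c₂) * e3
      - (Ideal.Quotient.mkₐ k I g₁) * e2
  refine ⟨?_, ?_, ?_, ?_⟩
  · intro c₁ c₂ g₁ g₂ hg₁ hg₂ hh
    ext1 x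
    apply inj (c₁ + c₂)
    have e1 := key _ _ hg₁ x
    have e2 := key _ _ hg₂ x
    have hh' := congrArg (Ideal.Quotient.mkₐ k I) hh
    simp only [map_mul, map_pow] at hh'
    simp only [LinearMap.comp_apply]
    rw [pow_add]
    linear_combination ((Ideal.Quotient.mkₐ k I h) ^ c₂) * e1
      - ((Ideal.Quotient.mkₐ k I h) ^ c₁) * e2 + (x : BiRing k n m ⧸ I) * hh'
  · intro h1
    ext1 x
    apply inj 0
    have e1 := key _ _ h1 x
    simp only [LinearMap.comp_apply, LinearMap.id_apply]
    rw [e1, map_one, pow_zero]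
  · intro c g₁ g₂ hg₁ hg₂ hg₁₂
    ext1 x
    apply inj c
    have e1 := key _ _ hg₁ x
    have e2 := key _ _ hg₂ x
    have e3 := key _ _ hg₁₂ x
    rw [map_add] at e3
    simp only [LinearMap.comp_apply, LinearMap.add_apply, Submodule.coe_add]
    linear_combination e3 - e1 - e2
  · intro c₁ c₂ g₁ g₂ hg₁ hg₂ hg₁₂
    refine ⟨LinearMap.ext fun x => mulc c₁ c₂ g₁ g₂ hg₁ hg₂ hg₁₂ x, LinearMap.ext fun x => ?_⟩
    simp only [LinearMap.comp_apply]
    apply inj (c₁ + c₂)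
    have e1 := key _ _ hg₁₂ x
    have e2 := key _ _ hg₁ x
    have e3 := key _ _ hg₂ (ψ c₁ (mulMap k n m I a b c₁ g₁ hg₁ x))
    rw [map_mul] at e1
    rw [e1, pow_add]
    linear_combination (-(Ideal.Quotient.mkₐ k I h) ^ c₁) * e3
      - (Ideal.Quotient.mkₐ k I g₂) * e2
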